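/- Fix ℓ, n ∈ ℕ. The restrictions to ℓ-singular conjugacy classes of the irreducible characters χ^λ of S_n indexed by ℓ-singular partitions λ form a ℤ-basis for the ℤ-span of the restrictions of all irreducible characters of S_n to the ℓ-singular classes. -/

import Mathlib

open scoped Classical

namespace SnTable

variable {n : ℕ}

/-- The parts of a partition, listed in weakly decreasing order. -/
def descList (μ : Nat.Partition n) : List ℕ := (μ.parts.sort (· ≤ ·)).reverse

/-- Strict lexicographic order on partitions of `n` (comparing the lists of parts
written in decreasing order). -/
def plex (μ ν : Nat.Partition n) : Prop := List.Lex (· < ·) (descList μ) (descList ν)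

/-- Weak lexicographic order on partitions of `n`. -/
def plexLE (μ ν : Nat.Partition n) : Prop := μ = ν ∨ plex μ ν

/-- `a_μ = ∏ i^{m_i(μ)}`, the product of the parts of `μ`. -/
def aNum (μ : Nat.Partition n) : ℕ := μ.parts.prod

/-- `b_μ = ∏ m_i(μ)!`, the product of the factorials of the multiplicities. -/
def bNum (μ : Nat.Partition n) : ℕ :=
  ∏ i ∈ μ.parts.toFinset, (μ.parts.count i).factorial

/-- `z_μ = a_μ b_μ`, the centralizer order of an element of cycle type `μ` in `S_n`. -/
def zNum (μ : Nat.Partition n) : ℕ := aNum μ * bNum μ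

/-- The cycle type of a permutation of `Fin n`, as a partition of `n`. -/
def cycleTypePartition (g : Equiv.Perm (Fin n)) : Nat.Partition n :=
  (Fintype.card_fin n) ▸ g.partition

/-- The value at `g` of the permutation character `ξ^λ` of `S_n` obtained by inducing the
trivial character from the Young subgroup `S_λ`: it counts the ordered set partitions of
`Fin n` with block sizes `λ₁ ≥ λ₂ ≥ …` that are fixed by `g`. -/
def permChar (lam : Nat.Partition n) (g : Equiv.Perm (Fin n)) : ℕ :=
  Fintype.card {f : Fin n → Fin (descList lam).length //
    (∀ x, f (g x) = f x) ∧
    ∀ j, (Finset.univ.filter fun x => f x = j).card = (descList lam).get j}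

/-- `X` is the character table of the symmetric group `S_n`, with rows and columns indexed
by the partitions of `n`: each row is an irreducible character (as a class function, via
cycle types), distinct rows are distinct characters, and the labelling is the standard one,
pinned down by the fact that the transition matrix expressing the Young permutation
characters `ξ^λ` in terms of the rows of `X` is unitriangular with respect to the
lexicographic order. -/
def IsCharTable (X : Nat.Partition n → Nat.Partition n → ℤ) : Prop :=
  (∀ lam : Nat.Partition n, ∃ V : FDRep ℂ (Equiv.Perm (Fin n)),
      CategoryTheory.Simple V ∧
      ∀ g : Equiv.Perm (Fin n), V.character g = (X lam (cycleTypePartition g) : ℂ)) ∧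
  (∃ d : Nat.Partition n → Nat.Partition n → ℤ,
      (∀ lam, d lam lam = 1) ∧
      (∀ lam mu, d lam mu ≠ 0 → plexLE lam mu) ∧
      (∀ lam (g : Equiv.Perm (Fin n)),
        (permChar lam g : ℤ) = ∑ mu, d lam mu * X mu (cycleTypePartition g))) ∧
  Function.Injective X


/-- A partition is `ℓ`-singular if some part size occurs with multiplicity at least `ℓ`. -/
def IsSingular (ℓ : ℕ) {n : ℕ} (lam : Nat.Partition n) : Prop :=
  ∃ i ∈ lam.parts, ℓ ≤ lam.parts.count i

/-- A partition (cycle type) is `ℓ`-class singular if some part is divisible by `ℓ`. -/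
def IsClassSingular (ℓ : ℕ) {n : ℕ} (μ : Nat.Partition n) : Prop :=
  ∃ i ∈ μ.parts, ℓ ∣ i

theorem lex_of_count (M : ℕ) : ∀ (l₁ l₂ : List ℕ), l₁.Pairwise (· ≥ ·) → l₂.Pairwise (· ≥ ·) →
    (∀ i, M < i → l₁.count i = l₂.count i) → l₁.count M < l₂.count M →
    List.Lex (· < ·) l₁ l₂
  | _, [], _, _, _, h => by simp at h
  | [], b :: l₂, _, _, _, _ => List.Lex.nil
  | a :: l₁, b :: l₂, h₁, h₂, h, hM => by
    rcases lt_trichotomy a b with hab | hab | hab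
    · exact List.Lex.rel hab
    · subst hab
      refine List.Lex.cons (lex_of_count M l₁ l₂ h₁.tail h₂.tail ?_ ?_)
      · intro i hi
        have := h i hi
        simp only [List.count_cons] at this
        omega
      · simp only [List.count_cons] at hM
        omega
    · exfalso
      have hz : ∀ i, b < i → (b :: l₂).count i = 0 := by
        intro i hi
        rw [List.count_eq_zero]
        intro hmem
        rcases List.mem_cons.1 hmem with h' | h'
        · omega
        · have := (List.pairwise_cons.1 h₂).1 i h'
          omega
      by_cases haM : M < a
      · have h3 := h a haM
        rw [hz a hab] at h3
        simp at h3
      · rw [hz M (by omega)] at hM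
        omega

theorem coe_descList (μ : Nat.Partition n) : (descList μ : Multiset ℕ) = μ.parts := by
  unfold descList
  rw [← Multiset.coe_reverse, List.reverse_reverse, Multiset.sort_eq]

theorem descList_pairwise (μ : Nat.Partition n) : (descList μ).Pairwise (· ≥ ·) := by
  unfold descList
  rw [List.pairwise_reverse]
  exact Multiset.pairwise_sort _ _

theorem descList_injective : Function.Injective (descList (n := n)) := by
  intro μ ν h
  apply Nat.Partition.ext
  rw [← coe_descList, ← coe_descList, h]

theorem plex_of_count (M : ℕ) (μ ν : Nat.Partition n)
    (h : ∀ i, M < i → μ.parts.count i = ν.parts.count i)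
    (hM : μ.parts.count M < ν.parts.count M) : plex μ ν := by
  apply lex_of_count M _ _ (descList_pairwise μ) (descList_pairwise ν)
  · intro i hi
    rw [← Multiset.coe_count, ← Multiset.coe_count, coe_descList, coe_descList, h i hi]
  · rw [← Multiset.coe_count, ← Multiset.coe_count, coe_descList, coe_descList]
    exact hM

theorem plexLE_iff (μ ν : Nat.Partition n) : plexLE μ ν ↔ descList μ ≤ descList ν := by
  rw [le_iff_eq_or_lt, descList_injective.eq_iff]
  exact or_congr Iff.rfl (List.lt_iff_lex_lt _ _).symm

theorem not_plex_self (μ : Nat.Partition n) : ¬ plex μ μ := by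
  exact fun h => lt_irrefl (descList μ) ((List.lt_iff_lex_lt _ _).2 h)

theorem exists_cyclo (ℓ : ℕ) (hℓ : 1 ≤ ℓ) :
    ∃ (A : Type) (_ : CommRing A) (_ : IsDomain A) (ζ : A) (φ : A →+ ℤ),
      IsPrimitiveRoot ζ ℓ ∧ φ 1 = 1 := by
  have hmon := Polynomial.cyclotomic.monic ℓ ℤ
  have hirr := Polynomial.cyclotomic.irreducible (n := ℓ) hℓ
  have hpr : Prime (Polynomial.cyclotomic ℓ ℤ) := hirr.prime
  have : IsDomain (AdjoinRoot (Polynomial.cyclotomic ℓ ℤ)) := AdjoinRoot.isDomain_of_prime hpr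
  have hdeg : 0 < (Polynomial.cyclotomic ℓ ℤ).natDegree := by
    rw [Polynomial.natDegree_cyclotomic]
    exact Nat.totient_pos.2 hℓ
  let pb := AdjoinRoot.powerBasis' hmon
  have hinj : Function.Injective (algebraMap ℤ (AdjoinRoot (Polynomial.cyclotomic ℓ ℤ))) := by
    apply AdjoinRoot.of.injective_of_degree_ne_zero
    rw [Polynomial.degree_eq_natDegree hmon.ne_zero]
    exact_mod_cast hdeg.ne'
  have : NeZero ((ℓ : ℕ) : AdjoinRoot (Polynomial.cyclotomic ℓ ℤ)) := by
    constructor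
    intro h
    have : algebraMap ℤ (AdjoinRoot (Polynomial.cyclotomic ℓ ℤ)) (ℓ : ℤ)
      = algebraMap ℤ (AdjoinRoot (Polynomial.cyclotomic ℓ ℤ)) 0 := by simpa using h
    have := hinj this
    omega
  have hd : 0 < pb.dim := hdeg
  refine ⟨AdjoinRoot (Polynomial.cyclotomic ℓ ℤ), inferInstance, inferInstance, AdjoinRoot.root _,
    (pb.basis.coord ⟨0, hd⟩).toAddMonoidHom, ?_, ?_⟩
  · rw [← Polynomial.isRoot_cyclotomic_iff]
    have := AdjoinRoot.eval₂_root (Polynomial.cyclotomic ℓ ℤ)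
    rw [Polynomial.eval₂_eq_eval_map, Polynomial.map_cyclotomic] at this
    exact this
  · have h1 : pb.basis ⟨0, hd⟩ = 1 := by simp
    change pb.basis.coord ⟨0, hd⟩ 1 = 1
    rw [Module.Basis.coord_apply, ← h1, Module.Basis.repr_self, Finsupp.single_eq_same]

theorem ct_parts (g : Equiv.Perm (Fin n)) : (cycleTypePartition g).parts = g.partition.parts := by
  have key : ∀ (m : ℕ) (h : Fintype.card (Fin n) = m),
      (h ▸ g.partition : Nat.Partition m).parts = g.partition.parts := by
    intro m h
    subst h
    rfl
  exact key n _

theorem ct_surj : Function.Surjective (cycleTypePartition (n := n)) := by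
  intro μ
  have h := (Equiv.Perm.exists_with_cycleType_iff (Fin n)
    (m := μ.parts.filter (fun i => 2 ≤ i))).2 ⟨?_, ?_⟩
  · obtain ⟨g, hg⟩ := h
    refine ⟨g, ?_⟩
    apply Nat.Partition.ext
    rw [ct_parts, Equiv.Perm.parts_partition, ← Equiv.Perm.sum_cycleType, hg, Fintype.card_fin]
    have h2 : μ.parts.filter (fun i => ¬ 2 ≤ i)
        = Multiset.replicate (μ.parts.filter (fun i => ¬ 2 ≤ i)).card 1 := by
      rw [Multiset.eq_replicate]
      refine ⟨rfl, ?_⟩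
      intro b hb
      rw [Multiset.mem_filter] at hb
      have := μ.parts_pos hb.1
      omega
    have h3 := Multiset.filter_add_not (fun i => 2 ≤ i) μ.parts
    have h4 : (μ.parts.filter (fun i => 2 ≤ i)).sum
        + (μ.parts.filter (fun i => ¬ 2 ≤ i)).card = n := by
      conv_rhs => rw [← μ.parts_sum, ← h3, Multiset.sum_add, h2]
      simp
    conv_rhs => rw [← h3, h2]
    congr 2
    omega
  · rw [Fintype.card_fin]
    have h3 := Multiset.filter_add_not (fun i => 2 ≤ i) μ.parts
    have := μ.parts_sum
    rw [← h3, Multiset.sum_add] at this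
    omega
  · intro a ha
    exact (Multiset.mem_filter.1 ha).2

theorem ct_inv (g : Equiv.Perm (Fin n)) : cycleTypePartition g⁻¹ = cycleTypePartition g := by
  apply Nat.Partition.ext
  rw [ct_parts, ct_parts, Equiv.Perm.parts_partition, Equiv.Perm.parts_partition,
    Equiv.Perm.cycleType_inv, Equiv.Perm.support_inv]

theorem cycle_card_mem (g : Equiv.Perm (Fin n)) (x : Fin n) :
    (Finset.univ.filter fun y => g.SameCycle x y).card ∈ (cycleTypePartition g).parts := by
  rw [ct_parts, Equiv.Perm.parts_partition, Multiset.mem_add]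
  by_cases hx : g x = x
  · right
    have : (Finset.univ.filter fun y => g.SameCycle x y) = {x} := by
      ext y
      simp only [Finset.mem_filter, Finset.mem_univ, true_and, Finset.mem_singleton]
      constructor
      · rintro ⟨k, hk⟩
        rw [← hk]
        exact (Equiv.Perm.zpow_apply_eq_self_of_apply_eq_self hx k)
      · rintro rfl
        exact Equiv.Perm.SameCycle.refl _ _
    rw [this, Finset.card_singleton, Multiset.mem_replicate]
    refine ⟨?_, rfl⟩
    have : g.support.card < Fintype.card (Fin n) := by
      apply Finset.card_lt_univ_of_notMem (x := x)
      simpa using hx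
    omega
  · left
    have : (Finset.univ.filter fun y => g.SameCycle x y) = (g.cycleOf x).support := by
      ext y
      rw [Equiv.Perm.mem_support_cycleOf_iff' hx]
      simp
    rw [this, Equiv.Perm.cycleType_def, Multiset.mem_map]
    refine ⟨g.cycleOf x, ?_, rfl⟩
    rw [Finset.mem_val, Equiv.Perm.cycleOf_mem_cycleFactorsFinset_iff]
    simpa using hx

theorem inv_sameCycle {κ : Type*} (g : Equiv.Perm (Fin n)) (f : Fin n → κ)
    (hf : ∀ x, f (g x) = f x) {x y : Fin n} (h : g.SameCycle x y) : f y = f x := by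
  obtain ⟨i, -, rfl⟩ := h.exists_pow_eq'
  induction i with
  | zero => simp
  | succ k ih => rw [pow_succ', Equiv.Perm.mul_apply, hf, ih ⟨k, rfl⟩]

theorem card_eq_permChar {κ : Type} [Fintype κ] (α : κ → ℕ) (ν : Nat.Partition n)
    (h : ν.parts = ((Finset.univ : Finset κ).val.map α).filter (· ≠ 0))
    (g : Equiv.Perm (Fin n)) :
    (Finset.univ.filter fun f : Fin n → κ => (∀ x, f (g x) = f x) ∧
      ∀ j, (Finset.univ.filter fun x => f x = j).card = α j).card = permChar ν g := by
  have hperm : List.Perm (descList ν)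
      (((Finset.univ.filter fun k : κ => α k ≠ 0).toList).map α) := by
    rw [← Multiset.coe_eq_coe, coe_descList, h, ← Multiset.map_coe, Finset.coe_toList,
      Finset.filter_val, Multiset.filter_map]
    rfl
  have hc : Relation.Comp (fun a b => a = List.map α b) List.Perm (descList ν)
      ((Finset.univ.filter fun k : κ => α k ≠ 0).toList) := by
    have := List.eq_map_comp_perm α
    rw [this]
    exact hperm
  obtain ⟨l, hl, hp⟩ := hc
  have hnd : l.Nodup := hp.nodup_iff.2 (Finset.nodup_toList _)
  have hmem : ∀ k, α k ≠ 0 → k ∈ l := by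
    intro k hk
    rw [hp.mem_iff]
    simpa using hk
  have hlen : (descList ν).length = l.length := by rw [hl, List.length_map]
  let j : Fin (descList ν).length → κ := fun i => l.get (i.cast hlen)
  have hjinj : Function.Injective j := by
    intro a b hab
    have := hnd.injective_get hab
    simpa [Fin.ext_iff] using this
  have hjα : ∀ i, α (j i) = (descList ν).get i := by
    intro i
    simp only [j, List.get_eq_getElem, hl]
    simp
  have hjs : ∀ k, α k ≠ 0 → ∃ i, j i = k := by
    intro k hk
    obtain ⟨i, hi⟩ := List.get_of_mem (hmem k hk)
    exact ⟨i.cast hlen.symm, by simpa [j] using hi⟩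
  unfold permChar
  rw [Fintype.card_subtype]
  symm
  refine Finset.card_bij (fun f _ => j ∘ f) ?_ ?_ ?_
  · intro f hf
    simp only [Finset.mem_filter, Finset.mem_univ, true_and] at hf ⊢
    refine ⟨fun x => by simp [hf.1 x], ?_⟩
    intro k
    by_cases hk : ∃ i, j i = k
    · obtain ⟨i, rfl⟩ := hk
      rw [hjα, ← hf.2 i]
      congr 1
      ext x
      simp [hjinj.eq_iff]
    · have h0 : α k = 0 := by
        by_contra h0
        exact hk (hjs k h0)
      rw [h0, Finset.card_eq_zero, Finset.filter_eq_empty_iff]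
      intro x _ hx
      exact hk ⟨f x, hx⟩
  · intro f _ f' _ hff
    funext x
    exact hjinj (congrFun hff x)
  · intro f hf
    simp only [Finset.mem_filter, Finset.mem_univ, true_and] at hf
    have hx : ∀ x, ∃ i, j i = f x := by
      intro x
      apply hjs
      rw [← hf.2 (f x)]
      apply Finset.card_ne_zero_of_mem (a := x)
      simp
    choose f' hf' using hx
    refine ⟨f', ?_, funext hf'⟩
    simp only [Finset.mem_filter, Finset.mem_univ, true_and]
    refine ⟨?_, ?_⟩
    · intro x
      apply hjinj
      rw [hf', hf', hf.1]
    · intro i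
      rw [← hjα, ← hf.2 (j i)]
      congr 1
      ext x
      simp [← hf', hjinj.eq_iff]

theorem vanish {A : Type} [CommRing A] [IsDomain A] (ℓ : ℕ) [NeZero ℓ] {ζ : A}
    (hζ : IsPrimitiveRoot ζ ℓ) {m : ℕ} (β : Fin m → ℕ) (hβ : ∑ j, β j < n)
    (g : Equiv.Perm (Fin n)) (hg : ¬ IsClassSingular ℓ (cycleTypePartition g)) :
    ∑ f ∈ Finset.univ.filter (fun f : Fin n → ZMod ℓ ⊕ Fin m => (∀ x, f (g x) = f x) ∧
      ∀ j, (Finset.univ.filter fun x => f x = Sum.inr j).card = β j),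
      ∏ x, (Sum.elim (AddChar.zmodChar ℓ hζ.pow_eq_one) (fun _ => 1) (f x) : A) = 0 := by
  set w : ZMod ℓ ⊕ Fin m → A := Sum.elim (AddChar.zmodChar ℓ hζ.pow_eq_one) (fun _ => 1) with hw
  let c : ZMod ℓ ⊕ Fin m → Option (Fin m) := Sum.elim (fun _ => none) some
  rw [← Finset.sum_fiberwise _ (fun f : Fin n → ZMod ℓ ⊕ Fin m => c ∘ f)]
  apply Finset.sum_eq_zero
  intro q _
  rw [Finset.filter_filter]
  rcases Finset.eq_empty_or_nonempty (Finset.univ.filter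
    (fun f : Fin n → ZMod ℓ ⊕ Fin m => ((∀ x, f (g x) = f x) ∧
      ∀ j, (Finset.univ.filter fun x => f x = Sum.inr j).card = β j) ∧ c ∘ f = q)) with he | he
  · rw [he, Finset.sum_empty]
  obtain ⟨f0, hf0⟩ := he
  simp only [Finset.mem_filter, Finset.mem_univ, true_and] at hf0
  obtain ⟨⟨hinv, hfib⟩, hq⟩ := hf0
  have hx0 : ∃ x0, q x0 = none := by
    by_contra hne
    push Not at hne
    have h1 : (Finset.univ : Finset (Fin n)).card = ∑ j, β j := by
      rw [Finset.card_eq_sum_card_fiberwise (f := f0)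
        (t := Finset.univ.map ⟨Sum.inr, Sum.inr_injective⟩)]
      · rw [Finset.sum_map]
        exact Finset.sum_congr rfl fun j _ => hfib j
      · intro x _
        have := hne x
        rw [← hq] at this
        rcases hfx : f0 x with a | b
        · simp [hfx, c] at this
        · simp
    rw [Finset.card_univ, Fintype.card_fin] at h1
    omega
  obtain ⟨x0, hx0⟩ := hx0
  let C : Finset (Fin n) := Finset.univ.filter fun y => g.SameCycle x0 y
  have hCg : ∀ x, g x ∈ C ↔ x ∈ C := by
    intro x
    simp [C]
  have hqC : ∀ x ∈ C, q x = none := by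
    intro x hx
    rw [← hx0, ← hq]
    exact congrArg c (inv_sameCycle g f0 hinv (by simpa [C] using hx))
  let s : Equiv.Perm (ZMod ℓ ⊕ Fin m) := Equiv.sumCongr (Equiv.addRight 1) (Equiv.refl _)
  let e : Equiv.Perm (Fin n → ZMod ℓ ⊕ Fin m) :=
    Equiv.piCongrRight (fun x => if x ∈ C then s else Equiv.refl _)
  have hcs : ∀ k, c (s k) = c k := by
    rintro (a | b) <;> simp [s, c]
  have hsr : ∀ k j, s k = Sum.inr j ↔ k = Sum.inr j := by
    rintro (a | b) j <;> simp [s]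
  have he : ∀ f x, e f x = if x ∈ C then s (f x) else f x := by
    intro f x
    simp only [e, Equiv.piCongrRight_apply, Pi.map_apply]
    split_ifs <;> rfl
  have hec : ∀ f, c ∘ (e f) = c ∘ f := by
    intro f
    funext x
    simp only [Function.comp, he]
    split_ifs
    · exact hcs _
    · rfl
  have her : ∀ f x j, e f x = Sum.inr j ↔ f x = Sum.inr j := by
    intro f x j
    rw [he]
    split_ifs
    · exact hsr _ _
    · rfl
  have hei : ∀ f x, e f (g x) = e f x ↔ f (g x) = f x := by
    intro f x
    rw [he, he]
    simp only [hCg]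
    split_ifs
    · exact s.injective.eq_iff
    · rfl
  set S := Finset.univ.filter
    (fun f : Fin n → ZMod ℓ ⊕ Fin m => ((∀ x, f (g x) = f x) ∧
      ∀ j, (Finset.univ.filter fun x => f x = Sum.inr j).card = β j) ∧ c ∘ f = q) with hS
  have key : ∑ f ∈ S, ∏ x, w (e f x) = ∑ f ∈ S, ∏ x, w (f x) := by
    apply Finset.sum_equiv e
    · intro f
      simp only [hS, Finset.mem_filter, Finset.mem_univ, true_and, hec, her, hei]
    · intro f _
      rfl
  have key2 : ∀ f ∈ S, ∏ x, w (e f x) = ζ ^ C.card * ∏ x, w (f x) := by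
    intro f hf
    simp only [hS, Finset.mem_filter, Finset.mem_univ, true_and] at hf
    have h1 : ∀ x, w (e f x) = (if x ∈ C then ζ else 1) * w (f x) := by
      intro x
      rw [he]
      split_ifs with hx
      · have h2 := hqC x hx
        rw [← hf.2] at h2
        rcases hfx : f x with a | b
        · have h3 : AddChar.zmodChar ℓ hζ.pow_eq_one (1 : ZMod ℓ) = ζ := by
            have := AddChar.zmodChar_apply' hζ.pow_eq_one 1
            simpa using this
          simp [s, hw, AddChar.map_add_eq_mul, h3, mul_comm]
        · simp [hfx, c] at h2
      · rw [one_mul]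
    simp only [h1]
    rw [Finset.prod_mul_distrib]
    congr 1
    rw [Finset.prod_ite]
    simp
  rw [Finset.sum_congr rfl key2, ← Finset.mul_sum] at key
  have hne : ζ ^ C.card ≠ 1 := by
    intro h1
    exact hg ⟨C.card, cycle_card_mem g x0, (hζ.pow_eq_one_iff_dvd _).1 h1⟩
  have h5 : (ζ ^ C.card - 1) * ∑ f ∈ S, ∏ x, w (f x) = 0 := by
    rw [sub_mul, key, one_mul, sub_self]
  exact (mul_eq_zero.1 h5).resolve_left (sub_ne_zero.2 hne)

theorem exists_rel (ℓ : ℕ) (hℓ : 1 ≤ ℓ) (lam : Nat.Partition n) (hlam : IsSingular ℓ lam) :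
    ∃ a : Nat.Partition n → ℤ, a lam = 1 ∧ (∀ ν, a ν ≠ 0 → plexLE lam ν) ∧
      ∀ g : Equiv.Perm (Fin n), ¬ IsClassSingular ℓ (cycleTypePartition g) →
        ∑ ν, a ν * (permChar ν g : ℤ) = 0 := by
  have : NeZero ℓ := ⟨by omega⟩
  obtain ⟨A, _, _, ζ, φ, hζ, hφ⟩ := exists_cyclo ℓ hℓ
  obtain ⟨r, hr, hcount⟩ := hlam
  have hrpos : 0 < r := lam.parts_pos hr
  obtain ⟨M, hM⟩ := Multiset.le_iff_exists_add.1 (Multiset.le_count_iff_replicate_le.1 hcount)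
  let μl := M.toList
  have hμl : (μl : Multiset ℕ) = M := Multiset.coe_toList M
  let m := μl.length
  let β : Fin m → ℕ := μl.get
  have hβM : (Finset.univ : Finset (Fin m)).val.map β = M := by
    rw [← hμl]
    change Multiset.map μl.get (Finset.univ : Finset (Fin μl.length)).val = _
    rw [Fin.univ_val_map, List.ofFn_get]
  have hβsum : ∑ j, β j = M.sum := by
    rw [← hβM]
    rfl
  have hn : ℓ * r + ∑ j, β j = n := by
    rw [hβsum]
    have := lam.parts_sum
    rw [hM, Multiset.sum_add, Multiset.sum_replicate, smul_eq_mul] at this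
    exact this
  have hlr : 0 < ℓ * r := Nat.mul_pos hℓ hrpos
  let w : ZMod ℓ ⊕ Fin m → A := Sum.elim (AddChar.zmodChar ℓ hζ.pow_eq_one) (fun _ => 1)
  let α0 : ZMod ℓ ⊕ Fin m → ℕ := Sum.elim (fun _ => r) β
  let wt : (ZMod ℓ ⊕ Fin m → ℕ) → A := fun α => ∏ j, w j ^ α j
  have hwt : wt α0 ^ ℓ = 1 := by
    simp only [wt]
    rw [← Finset.prod_pow]
    apply Finset.prod_eq_one
    rintro (j | j) _
    · simp only [w, Sum.elim_inl, AddChar.zmodChar_apply]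
      have h1 : ((ζ ^ j.val) ^ α0 (Sum.inl j)) ^ ℓ = (ζ ^ ℓ) ^ (j.val * α0 (Sum.inl j)) := by
        ring
      rw [h1, hζ.pow_eq_one, one_pow]
    · simp [w]
  let u : A := wt α0 ^ (ℓ - 1)
  have hu : u * wt α0 = 1 := by
    rw [← hwt, ← pow_succ, Nat.sub_add_cancel hℓ]
  let S : Finset (ZMod ℓ ⊕ Fin m → ℕ) :=
    (Fintype.piFinset fun _ => Finset.range (n + 1)).filter
      fun α => ∑ j, α j = n ∧ ∀ j, α (Sum.inr j) = β j
  let toP : (ZMod ℓ ⊕ Fin m → ℕ) → Nat.Partition n := fun α =>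
    if h : ∑ j, α j = n then Nat.Partition.ofSums n (Finset.univ.val.map α) h else lam
  have htoP : ∀ α, ∑ j, α j = n →
      (toP α).parts = ((Finset.univ : Finset (ZMod ℓ ⊕ Fin m)).val.map α).filter (· ≠ 0) := by
    intro α h
    simp only [toP, dif_pos h]
    rfl
  have hmapsum : ∀ α : ZMod ℓ ⊕ Fin m → ℕ, (∀ j, α (Sum.inr j) = β j) →
      (Finset.univ : Finset (ZMod ℓ ⊕ Fin m)).val.map α
        = (Finset.univ : Finset (ZMod ℓ)).val.map (fun a => α (Sum.inl a)) + M := by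
    intro α h
    rw [← hβM, ← Finset.univ_disjSum_univ, Finset.val_disjSum, Multiset.disjSum, Multiset.map_add,
      Multiset.map_map, Multiset.map_map]
    congr 1
    exact Multiset.map_congr rfl fun j _ => h j
  have hα0S : α0 ∈ S := by
    have hs : ∑ j, α0 j = n := by
      rw [Fintype.sum_sum_type]
      simp only [α0, Sum.elim_inl, Sum.elim_inr, Finset.sum_const, Finset.card_univ, ZMod.card,
        smul_eq_mul]
      exact hn
    simp only [S, Finset.mem_filter, Fintype.mem_piFinset, Finset.mem_range]
    refine ⟨?_, hs, fun j => rfl⟩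
    intro j
    have := Finset.single_le_sum (f := α0) (fun _ _ => Nat.zero_le _) (Finset.mem_univ j)
    omega
  have hα0P : toP α0 = lam := by
    apply Nat.Partition.ext
    have hs := (Finset.mem_filter.1 hα0S).2.1
    rw [htoP α0 hs, hmapsum α0 (fun j => rfl)]
    have : (Finset.univ : Finset (ZMod ℓ)).val.map (fun a => α0 (Sum.inl a))
        = Multiset.replicate ℓ r := by
      simp only [α0, Sum.elim_inl, Multiset.map_const']
      congr 1
      exact ZMod.card ℓ
    rw [this, ← hM, Multiset.filter_eq_self]
    intro a ha
    exact (lam.parts_pos ha).ne'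
  have hlex : ∀ α ∈ S, α ≠ α0 → plex lam (toP α) := by
    intro α hα hne
    simp only [S, Finset.mem_filter] at hα
    obtain ⟨-, hs, hb⟩ := hα
    have hsl : ∑ a : ZMod ℓ, α (Sum.inl a) = ℓ * r := by
      rw [Fintype.sum_sum_type] at hs
      simp only [hb] at hs
      omega
    have hgt : ∃ a : ZMod ℓ, r < α (Sum.inl a) := by
      by_contra hno
      push Not at hno
      apply hne
      have h1 : ∑ a : ZMod ℓ, α (Sum.inl a) = ∑ a : ZMod ℓ, r := by
        rw [hsl]
        simp [ZMod.card]
      have h2 := (Finset.sum_eq_sum_iff_of_le (fun a _ => hno a)).1 h1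
      funext j
      rcases j with a | b
      · exact h2 a (Finset.mem_univ _)
      · exact hb b
    obtain ⟨a1, -, ha1⟩ := Finset.exists_max_image Finset.univ (fun a : ZMod ℓ => α (Sum.inl a))
      ⟨0, Finset.mem_univ _⟩
    obtain ⟨a2, ha2⟩ := hgt
    have hr1 : r < α (Sum.inl a1) := lt_of_lt_of_le ha2 (ha1 a2 (Finset.mem_univ _))
    have hcl : ∀ i, r < i → lam.parts.count i = M.count i := by
      intro i hi
      rw [hM, Multiset.count_add, Multiset.count_replicate, if_neg (by omega), zero_add]
    have hcr : ∀ i, r < i → (toP α).parts.count i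
        = ((Finset.univ : Finset (ZMod ℓ)).val.map (fun a => α (Sum.inl a))).count i
          + M.count i := by
      intro i hi
      rw [htoP α hs, Multiset.count_filter_of_pos (by omega), hmapsum α hb, Multiset.count_add]
    apply plex_of_count (α (Sum.inl a1))
    · intro i hi
      have h0 : ((Finset.univ : Finset (ZMod ℓ)).val.map (fun a => α (Sum.inl a))).count i = 0 := by
        apply Multiset.count_eq_zero_of_notMem
        intro hmem
        obtain ⟨a, -, ha⟩ := Multiset.mem_map.1 hmem
        have := ha1 a (Finset.mem_univ _)
        omega
      rw [hcl i (by omega), hcr i (by omega), h0, zero_add]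
    · rw [hcl _ hr1, hcr _ hr1]
      have : 0 < ((Finset.univ : Finset (ZMod ℓ)).val.map (fun a => α (Sum.inl a))).count
          (α (Sum.inl a1)) :=
        Multiset.count_pos.2 (Multiset.mem_map.2 ⟨a1, Finset.mem_univ _, rfl⟩)
      omega
  refine ⟨fun ν => ∑ α ∈ S.filter (fun α => toP α = ν), φ (u * wt α), ?_, ?_, ?_⟩
  · have : S.filter (fun α => toP α = lam) = {α0} := by
      ext α
      simp only [Finset.mem_filter, Finset.mem_singleton]
      constructor
      · rintro ⟨h1, h2⟩
        by_contra hne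
        have := hlex α h1 hne
        rw [h2] at this
        exact not_plex_self _ this
      · rintro rfl
        exact ⟨hα0S, hα0P⟩
    simp only [this, Finset.sum_singleton, hu, hφ]
  · intro ν hν
    obtain ⟨α, hα, -⟩ := Finset.exists_ne_zero_of_sum_ne_zero hν
    obtain ⟨h1, rfl⟩ := Finset.mem_filter.1 hα
    by_cases hne : α = α0
    · left
      rw [hne, hα0P]
    · right
      exact hlex α h1 hne
  · intro g hg
    have hv := vanish ℓ hζ β (by omega) g hg
    have h1 : ∀ ν, (∑ α ∈ S.filter (fun α => toP α = ν), φ (u * wt α)) * (permChar ν g : ℤ)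
        = ∑ α ∈ S.filter (fun α => toP α = ν), φ (u * wt α) * (permChar (toP α) g : ℤ) := by
      intro ν
      rw [Finset.sum_mul]
      apply Finset.sum_congr rfl
      intro α hα
      rw [(Finset.mem_filter.1 hα).2]
    simp only [h1]
    rw [Finset.sum_fiberwise]
    let fib : (Fin n → ZMod ℓ ⊕ Fin m) → (ZMod ℓ ⊕ Fin m → ℕ) :=
      fun f j => (Finset.univ.filter fun x => f x = j).card
    let T := Finset.univ.filter (fun f : Fin n → ZMod ℓ ⊕ Fin m => (∀ x, f (g x) = f x) ∧
      ∀ j, (Finset.univ.filter fun x => f x = Sum.inr j).card = β j)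
    have hfibsum : ∀ f, ∑ j, fib f j = n := by
      intro f
      have := Finset.card_eq_sum_card_fiberwise (f := f) (s := Finset.univ) (t := Finset.univ)
        (by intro x _; simp)
      rw [Finset.card_univ, Fintype.card_fin] at this
      exact this.symm
    have hTS : ∀ f ∈ T, fib f ∈ S := by
      intro f hf
      simp only [S, Finset.mem_filter, Fintype.mem_piFinset, Finset.mem_range]
      refine ⟨?_, hfibsum f, (Finset.mem_filter.1 hf).2.2⟩
      intro j
      have h2 := Finset.single_le_sum (f := fib f) (fun _ _ => Nat.zero_le _) (Finset.mem_univ j)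
      have h3 := hfibsum f
      omega
    have hprod : ∀ f, ∏ x, w (f x) = wt (fib f) := by
      intro f
      simp only [wt, fib]
      rw [← Finset.prod_fiberwise_of_maps_to (g := f) (t := Finset.univ)
        (fun x _ => Finset.mem_univ _)]
      apply Finset.prod_congr rfl
      intro j _
      rw [← Finset.prod_const]
      apply Finset.prod_congr rfl
      intro x hx
      rw [(Finset.mem_filter.1 hx).2]
    have h4 : ∀ α ∈ S, φ (u * wt α) * (permChar (toP α) g : ℤ)
        = φ (∑ f ∈ T.filter (fun f => fib f = α), u * ∏ x, w (f x)) := by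
      intro α hα
      have hα' := (Finset.mem_filter.1 hα).2
      have h5 : ∑ f ∈ T.filter (fun f => fib f = α), u * ∏ x, w (f x)
          = (T.filter (fun f => fib f = α)).card • (u * wt α) := by
        rw [← Finset.sum_const]
        apply Finset.sum_congr rfl
        intro f hf
        rw [hprod, (Finset.mem_filter.1 hf).2]
      have h6 : T.filter (fun f => fib f = α) = (Finset.univ.filter
          fun f : Fin n → ZMod ℓ ⊕ Fin m => (∀ x, f (g x) = f x) ∧
          ∀ j, (Finset.univ.filter fun x => f x = j).card = α j) := by
        ext f
        simp only [T, Finset.mem_filter, Finset.mem_univ, true_and]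
        constructor
        · rintro ⟨⟨h7, h8⟩, h9⟩
          exact ⟨h7, fun j => congrFun h9 j⟩
        · rintro ⟨h7, h8⟩
          exact ⟨⟨h7, fun j => (h8 _).trans (hα'.2 j)⟩, funext h8⟩
      have h7 : (T.filter (fun f => fib f = α)).card = permChar (toP α) g := by
        rw [h6, ← card_eq_permChar α (toP α) (htoP α hα'.1) g]
        congr!
      rw [h5, map_nsmul, h7, nsmul_eq_mul, mul_comm]
    rw [Finset.sum_congr rfl h4, ← map_sum, Finset.sum_fiberwise_of_maps_to hTS, ← Finset.mul_sum]
    have h10 : ∑ f ∈ T, ∏ x, w (f x) = 0 := hv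
    rw [h10, mul_zero, map_zero]

theorem orth (X : Nat.Partition n → Nat.Partition n → ℤ) (hX : IsCharTable X)
    (lam mu : Nat.Partition n) :
    ∑ g : Equiv.Perm (Fin n), X lam (cycleTypePartition g) * X mu (cycleTypePartition g)
      = if lam = mu then (Nat.card (Equiv.Perm (Fin n)) : ℤ) else 0 := by
  obtain ⟨hirr, -, hinj⟩ := hX
  have h0 : (Nat.card (Equiv.Perm (Fin n)) : ℂ) ≠ 0 := by
    exact_mod_cast Nat.card_pos.ne'
  have hsum : ∀ (V W : FDRep ℂ (Equiv.Perm (Fin n))) (lam mu : Nat.Partition n),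
      (∀ g, V.character g = (X lam (cycleTypePartition g) : ℂ)) →
      (∀ g, W.character g = (X mu (cycleTypePartition g) : ℂ)) →
      (∑ g : Equiv.Perm (Fin n), V.character g * W.character g⁻¹)
      = ((∑ g : Equiv.Perm (Fin n), X lam (cycleTypePartition g) * X mu (cycleTypePartition g) : ℤ)
        : ℂ) := by
    intro V W lam mu hVc hWc
    push_cast
    apply Finset.sum_congr rfl
    intro g _
    rw [hVc, hWc, ct_inv]
  obtain ⟨V, hV, hVc⟩ := hirr lam
  split_ifs with heq
  · subst heq
    have h := FDRep.char_orthonormal V V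
    rw [if_pos ⟨CategoryTheory.Iso.refl V⟩, hsum V V lam lam hVc hVc, inv_mul_eq_one₀ h0] at h
    exact_mod_cast h.symm
  · obtain ⟨W, hW, hWc⟩ := hirr mu
    have h := FDRep.char_orthonormal V W
    rw [if_neg, hsum V W lam mu hVc hWc] at h
    · have h2 := (mul_eq_zero.1 h).resolve_left (inv_ne_zero h0)
      exact_mod_cast h2
    · rintro ⟨i⟩
      apply heq
      apply hinj
      funext ρ
      obtain ⟨g, rfl⟩ := ct_surj ρ
      have h1 := congrFun (FDRep.char_iso i) g
      rw [hVc, hWc] at h1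
      exact_mod_cast h1

theorem card_sing (ℓ : ℕ) (hℓ : 1 ≤ ℓ) :
    Fintype.card {lam : Nat.Partition n // IsSingular ℓ lam}
      = Fintype.card {μ : Nat.Partition n // IsClassSingular ℓ μ} := by
  have h := Nat.Partition.card_restricted_eq_card_countRestricted n (m := ℓ) hℓ
  have h1 : Fintype.card {lam : Nat.Partition n // ¬ IsSingular ℓ lam}
      = (Nat.Partition.countRestricted n ℓ).card := by
    rw [Fintype.card_subtype, Nat.Partition.countRestricted]
    congr 1
    ext lam
    simp [IsSingular]
  have h2 : Fintype.card {μ : Nat.Partition n // ¬ IsClassSingular ℓ μ}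
      = (Nat.Partition.restricted n (¬ ℓ ∣ ·)).card := by
    rw [Fintype.card_subtype, Nat.Partition.restricted]
    congr 1
    ext lam
    simp [IsClassSingular]
  have h3 := Fintype.card_subtype_compl (fun lam : Nat.Partition n => IsSingular ℓ lam)
  have h4 := Fintype.card_subtype_compl (fun lam : Nat.Partition n => IsClassSingular ℓ lam)
  have h5 := Fintype.card_subtype_le (fun lam : Nat.Partition n => IsSingular ℓ lam)
  have h6 := Fintype.card_subtype_le (fun lam : Nat.Partition n => IsClassSingular ℓ lam)
  omega

/-- Pairing of class functions, given as functions of cycle types. -/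
noncomputable def pair (v : Nat.Partition n → ℤ) : (Nat.Partition n → ℤ) →ₗ[ℤ] ℤ where
  toFun u := ∑ g : Equiv.Perm (Fin n), u (cycleTypePartition g) * v (cycleTypePartition g)
  map_add' a b := by
    rw [← Finset.sum_add_distrib]
    exact Finset.sum_congr rfl fun g _ => by simp [add_mul]
  map_smul' a b := by
    rw [smul_eq_mul, Finset.mul_sum]
    exact Finset.sum_congr rfl fun g _ => by simp [mul_assoc]

theorem pair_apply (u v : Nat.Partition n → ℤ) : pair v u
    = ∑ g : Equiv.Perm (Fin n), u (cycleTypePartition g) * v (cycleTypePartition g) := rfl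

theorem pair_comm (u v : Nat.Partition n → ℤ) : pair v u = pair u v := by
  rw [pair_apply, pair_apply]
  exact Finset.sum_congr rfl fun g _ => mul_comm _ _

theorem exists_family (ℓ : ℕ) (hℓ : 1 ≤ ℓ)
    (X : Nat.Partition n → Nat.Partition n → ℤ) (hX : IsCharTable X) (lam : Nat.Partition n)
    (hlam : IsSingular ℓ lam) :
    ∃ c : Nat.Partition n → ℤ, c lam = 1 ∧ (∀ ν, c ν ≠ 0 → plexLE lam ν) ∧
      ∀ ρ, ¬ IsClassSingular ℓ ρ → (∑ ν, c ν • X ν) ρ = 0 := by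
  obtain ⟨-, ⟨d, hd1, hd2, hd3⟩, -⟩ := hX
  obtain ⟨a, ha1, ha2, ha3⟩ := exists_rel ℓ hℓ lam hlam
  refine ⟨fun μ => ∑ ν, a ν * d ν μ, ?_, ?_, ?_⟩
  · change ∑ ν, a ν * d ν lam = 1
    rw [Finset.sum_eq_single lam, ha1, hd1, one_mul]
    · intro ν _ hne
      by_contra h0
      have h1 := (plexLE_iff _ _).1 (ha2 ν (left_ne_zero_of_mul h0))
      have h2 := (plexLE_iff _ _).1 (hd2 ν lam (right_ne_zero_of_mul h0))
      exact hne (descList_injective (le_antisymm h2 h1))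
    · intro h
      exact absurd (Finset.mem_univ _) h
  · intro μ hμ
    obtain ⟨ν, -, h0⟩ := Finset.exists_ne_zero_of_sum_ne_zero hμ
    have h1 := (plexLE_iff _ _).1 (ha2 ν (left_ne_zero_of_mul h0))
    have h2 := (plexLE_iff _ _).1 (hd2 ν μ (right_ne_zero_of_mul h0))
    exact (plexLE_iff _ _).2 (h1.trans h2)
  · intro ρ hρ
    obtain ⟨g, rfl⟩ := ct_surj ρ
    have h := ha3 g hρ
    simp only [hd3, Finset.mul_sum] at h
    rw [Finset.sum_comm] at h
    simp only [Finset.sum_apply, Pi.smul_apply, smul_eq_mul, Finset.sum_mul]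
    simpa only [mul_assoc] using h

theorem eq_zero_of_pair (ℓ : ℕ) {ι : Type} [Fintype ι]
    (hcard : Fintype.card ι = Fintype.card {μ : Nat.Partition n // IsClassSingular ℓ μ})
    (F : ι → Nat.Partition n → ℤ) (hF : ∀ i ρ, ¬ IsClassSingular ℓ ρ → F i ρ = 0)
    (hli : LinearIndependent ℤ F) (k : Nat.Partition n → ℤ) (hk : ∀ i, pair (F i) k = 0)
    (ρ : Nat.Partition n) (hρ : IsClassSingular ℓ ρ) : k ρ = 0 := by
  let Fq : ι → ({μ : Nat.Partition n // IsClassSingular ℓ μ} → ℚ) := fun i μ => (F i μ.1 : ℚ)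
  have hliq : LinearIndependent ℚ Fq := by
    rw [← LinearIndependent.iff_fractionRing ℤ ℚ, Fintype.linearIndependent_iff]
    intro y hy
    apply Fintype.linearIndependent_iff.1 hli y
    funext μ
    by_cases hμ : IsClassSingular ℓ μ
    · have := congrFun hy ⟨μ, hμ⟩
      simp only [Fq, Finset.sum_apply, Pi.smul_apply, Pi.zero_apply] at this
      simp only [zsmul_eq_mul] at this
      simp only [Finset.sum_apply, Pi.smul_apply, Pi.zero_apply, smul_eq_mul]
      exact_mod_cast this
    · simp [hF _ μ hμ]
  have htop := hliq.span_eq_top_of_card_eq_finrank' (by rw [hcard, Module.finrank_pi])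
  let L : ({μ : Nat.Partition n // IsClassSingular ℓ μ} → ℚ) →ₗ[ℚ] ℚ :=
    ∑ g : Equiv.Perm (Fin n), if h : IsClassSingular ℓ (cycleTypePartition g) then
      (k (cycleTypePartition g) : ℚ) • LinearMap.proj ⟨cycleTypePartition g, h⟩ else 0
  have hL : ∀ (v : Nat.Partition n → ℤ), (∀ ρ, ¬ IsClassSingular ℓ ρ → v ρ = 0) →
      L (fun μ => (v μ.1 : ℚ)) = (pair v k : ℤ) := by
    intro v hv
    rw [pair_apply]
    push_cast
    rw [LinearMap.sum_apply]
    apply Finset.sum_congr rfl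
    intro g _
    split_ifs with h
    · simp
    · simp [hv _ h]
  have hL0 : L = 0 := by
    apply LinearMap.ext_on_range htop
    intro i
    change L (fun μ => (F i μ.1 : ℚ)) = 0
    rw [hL (F i) (hF i), hk i]
    simp
  have h1 := hL (fun μ => if IsClassSingular ℓ μ then k μ else 0) (by
    intro ρ h
    simp [h])
  rw [hL0, LinearMap.zero_apply, eq_comm, Int.cast_eq_zero, pair_apply,
    Finset.sum_eq_zero_iff_of_nonneg] at h1
  · obtain ⟨g, rfl⟩ := ct_surj ρ
    have := h1 g (Finset.mem_univ _)
    rw [if_pos hρ] at this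
    exact mul_self_eq_zero.1 this
  · intro g _
    split_ifs
    · exact mul_self_nonneg _
    · simp

/-- **Corollary 5.2(1).** Fix `ℓ ≥ 1` and `n`.  The restrictions to the `ℓ`-singular conjugacy
classes of the irreducible characters `χ^λ` of `S_n` indexed by `ℓ`-singular partitions `λ` form
a ℤ-basis for the ℤ-span of the restrictions of all irreducible characters of `S_n` to the
`ℓ`-singular classes. -/
theorem singular_basic_set (ℓ n : ℕ) (hℓ : 1 ≤ ℓ)
    (X : Nat.Partition n → Nat.Partition n → ℤ) (hX : IsCharTable X) :
    (LinearIndependent ℤ fun lam : {lam : Nat.Partition n // IsSingular ℓ lam} =>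
        fun μ : {μ : Nat.Partition n // IsClassSingular ℓ μ} => X lam.1 μ.1) ∧
      Submodule.span ℤ (Set.range fun lam : {lam : Nat.Partition n // IsSingular ℓ lam} =>
          fun μ : {μ : Nat.Partition n // IsClassSingular ℓ μ} => X lam.1 μ.1) =
        Submodule.span ℤ (Set.range fun lam : Nat.Partition n =>
          fun μ : {μ : Nat.Partition n // IsClassSingular ℓ μ} => X lam μ.1) := by
  let S := {lam : Nat.Partition n // IsSingular ℓ lam}
  have hN : (Nat.card (Equiv.Perm (Fin n)) : ℤ) ≠ 0 := by
    exact_mod_cast Nat.card_pos.ne'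
  set N : ℤ := (Nat.card (Equiv.Perm (Fin n)) : ℤ) with hNdef
  have hex := fun s : S => exists_family ℓ hℓ X hX s.1 s.2
  choose c hc1 hc2 hc3 using hex
  let F : S → Nat.Partition n → ℤ := fun s => ∑ ν, c s ν • X ν
  have hXX : ∀ lam mu, pair (X lam) (X mu) = if mu = lam then N else 0 := fun lam mu =>
    orth X hX mu lam
  have hXF : ∀ lam s, pair (X lam) (F s) = N * c s lam := by
    intro lam s
    simp only [F, map_sum, map_smul, hXX, smul_eq_mul, mul_ite, mul_zero]
    rw [Finset.sum_ite_eq' Finset.univ lam, if_pos (Finset.mem_univ _), mul_comm]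
  have hFX : ∀ lam s, pair (F s) (X lam) = N * c s lam := fun lam s => by
    rw [pair_comm, hXF]
  let C : Matrix S S ℤ := Matrix.of fun s t => c s t.1
  have hdet : C.det = 1 := by
    let _ : LinearOrder S := LinearOrder.lift' (fun s : S => descList s.1)
      (descList_injective.comp Subtype.val_injective)
    have htri : C.BlockTriangular id := by
      intro s t hst
      by_contra h0
      have h1 := (plexLE_iff _ _).1 (hc2 s t.1 h0)
      exact absurd h1 (not_le.2 hst)
    rw [Matrix.det_of_isUpperTriangular htri]
    exact Finset.prod_eq_one fun s _ => hc1 s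
  have hunit : IsUnit C.det := by
    rw [hdet]
    exact isUnit_one
  have hFli : LinearIndependent ℤ F := by
    rw [Fintype.linearIndependent_iff]
    intro y hy
    have h1 : Matrix.vecMul y C = 0 := by
      funext t
      have h2 := congrArg (pair (X t.1)) hy
      simp only [map_sum, map_smul, hXF, map_zero, smul_eq_mul] at h2
      have h3 : N * ∑ s, y s * c s t.1 = 0 := by
        rw [← h2, Finset.mul_sum]
        exact Finset.sum_congr rfl fun s _ => by ring
      exact (mul_eq_zero.1 h3).resolve_left hN
    have h4 := Matrix.eq_zero_of_vecMul_eq_zero (M := C) (by rw [hdet]; exact one_ne_zero) h1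
    exact congrFun h4
  have hFvan : ∀ (u : Nat.Partition n → ℤ) s, (∀ ρ, IsClassSingular ℓ ρ → u ρ = 0) →
      pair (F s) u = 0 := by
    intro u s hu
    rw [pair_apply]
    apply Finset.sum_eq_zero
    intro g _
    by_cases h : IsClassSingular ℓ (cycleTypePartition g)
    · rw [hu _ h, zero_mul]
    · rw [show F s (cycleTypePartition g) = 0 from hc3 s _ h, mul_zero]
  refine ⟨?_, ?_⟩
  · rw [Fintype.linearIndependent_iff]
    intro y hy
    have h1 : Matrix.mulVec C y = 0 := by
      funext t
      have h2 := hFvan (∑ s : S, y s • X s.1) t (by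
        intro ρ hρ
        have := congrFun hy ⟨ρ, hρ⟩
        simpa using this)
      simp only [map_sum, map_smul, hFX, smul_eq_mul] at h2
      have h3 : N * ∑ s : S, c t s.1 * y s = 0 := by
        rw [← h2, Finset.mul_sum]
        exact Finset.sum_congr rfl fun s _ => by ring
      exact (mul_eq_zero.1 h3).resolve_left hN
    have h4 := Matrix.eq_zero_of_mulVec_eq_zero (M := C) (by rw [hdet]; exact one_ne_zero) h1
    exact congrFun h4
  · apply le_antisymm
    · apply Submodule.span_mono
      rintro _ ⟨s, rfl⟩
      exact ⟨s.1, rfl⟩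
    · rw [Submodule.span_le]
      rintro _ ⟨ν, rfl⟩
      let b : S → ℤ := Matrix.mulVec C⁻¹ (fun s => c s ν)
      have hb : Matrix.mulVec C b = fun s => c s ν := by
        simp only [b]
        rw [Matrix.mulVec_mulVec, Matrix.mul_nonsing_inv C hunit, Matrix.one_mulVec]
      have hk := eq_zero_of_pair ℓ (card_sing ℓ hℓ) F hc3 hFli (X ν - ∑ s : S, b s • X s.1) (by
        intro t
        have h1 : ∑ s : S, c t s.1 * b s = c t ν := congrFun hb t
        simp only [map_sub, map_sum, map_smul, hFX, smul_eq_mul]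
        rw [← h1, Finset.mul_sum, sub_eq_zero]
        exact Finset.sum_congr rfl fun s _ => by ring)
      have h2 : (fun μ : {μ : Nat.Partition n // IsClassSingular ℓ μ} => X ν μ.1)
          = ∑ s : S, b s • (fun μ : {μ : Nat.Partition n // IsClassSingular ℓ μ} => X s.1 μ.1) := by
        funext μ
        have h3 := hk μ.1 μ.2
        simp only [Pi.sub_apply, Finset.sum_apply, Pi.smul_apply] at h3 ⊢
        exact sub_eq_zero.1 h3
      rw [SetLike.mem_coe]
      beta_reduce
      rw [h2]
      apply Submodule.sum_mem
      intro s _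
      apply Submodule.smul_mem
      exact Submodule.subset_span ⟨s, rfl⟩

end SnTable
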